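/- (Pitts' uniform interpolation theorem, left interpolants.) For every intuitionistic propositional formula φ and every propositional variable p, there exists an intuitionistic propositional formula α such that: every propositional variable of α occurs in φ and α does not contain p; α ⊨ φ; and for every formula ψ not containing p, if ψ ⊨ φ then ψ ⊨ α. -/

import Mathlib

/-! The proof is semantic, by bounded bisimulations in the style of Visser and Ghilardi. Write `Q` for
the variables of `φ` other than `p`, and `w ~ₙ v` (`LBisim`) for `n`-step bisimilarity over `Q`.

* *Definability.* For each `n` there is a finite set of formulas over `Q` such that two nodes which
  agree on it are `n`-bisimilar (`exists_types`). Hence an `n`-type over `Q` is given by a subset `A`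
  of a finite set `F`, and `excl F A`, which is `⋀ A → ⋁ (F \ A)`, says that no later node realizes
  `A` exactly (`forces_excl`). The interpolant `α` is the conjunction of `excl F A` over all types `A`
  realized at some node of a finite model where `φ` fails. Clearly `α ⊨ φ`.
* *Amalgamation.* Let `X` be the set of subformulas of `φ`. If `w ~ₙ v` with `n ≥ 2|X| + 1`, there
  is a finite model with a node that satisfies the same `p`-free formulas as `w` and the same
  formulas of `X` as `v` (`amalgam_fst`, `amalgam_snd`). So if `ψ` is `p`-free, `ψ ⊨ φ`,
  and `w` forces `ψ`, then no node above `w` has the type of a node refuting `φ`: `w` forces `α`.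

The amalgam consists of pairs `(m, n)` of nodes. Moving along the order uses up bisimulation steps, so
the number of steps required of a pair is measured by the number of formulas of `X` that `n` does not
force; steps are then used up only when the set of forced formulas of `X` grows.
-/

/-- Intuitionistic propositional formulas over variables indexed by `ℕ`. -/
inductive IPForm : Type
  | var : ℕ → IPForm
  | bot : IPForm
  | conj : IPForm → IPForm → IPForm
  | disj : IPForm → IPForm → IPForm
  | impl : IPForm → IPForm → IPForm

/-- The set of propositional variables occurring in a formula. -/
def IPForm.vars : IPForm → Finset ℕ
  | .var p => {p}
  | .bot => ∅
  | .conj a b => a.vars ∪ b.vars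
  | .disj a b => a.vars ∪ b.vars
  | .impl a b => a.vars ∪ b.vars

/-- The implication-nesting depth of a formula. -/
def IPForm.depth : IPForm → ℕ
  | .var _ => 0
  | .bot => 0
  | .conj a b => max a.depth b.depth
  | .disj a b => max a.depth b.depth
  | .impl a b => max a.depth b.depth + 1

/-- An intuitionistic Kripke model: a preorder together with a persistent
valuation of the propositional variables. -/
structure KModel where
  W : Type
  rel : W → W → Prop
  refl : ∀ w, rel w w
  trans : ∀ {u v w}, rel u v → rel v w → rel u w
  val : ℕ → W → Prop
  mono : ∀ {p u v}, rel u v → val p u → val p v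

/-- The intuitionistic forcing relation. -/
def KModel.Forces (M : KModel) : M.W → IPForm → Prop
  | w, .var p => M.val p w
  | _, .bot => False
  | w, .conj a b => M.Forces w a ∧ M.Forces w b
  | w, .disj a b => M.Forces w a ∨ M.Forces w b
  | w, .impl a b => ∀ v, M.rel w v → M.Forces v a → M.Forces v b

/-- Semantic entailment over finite Kripke models. -/
def Entails (φ ψ : IPForm) : Prop :=
  ∀ (M : KModel), Finite M.W → ∀ w : M.W, M.Forces w φ → M.Forces w ψ


/-! ### Finite conjunctions and disjunctions -/

theorem KModel.Forces.persist {M : KModel} {φ : IPForm} {u v : M.W} (h : M.rel u v)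
    (hu : M.Forces u φ) : M.Forces v φ := by
  induction φ with
  | var q => exact M.mono h hu
  | bot => exact hu
  | conj a b iha ihb => exact ⟨iha hu.1, ihb hu.2⟩
  | disj a b iha ihb => exact hu.imp iha ihb
  | impl a b _ _ => exact fun x hx => hu x (M.trans h hx)

namespace PittsInterp

noncomputable instance : DecidableEq IPForm := Classical.decEq _

def listConj : List IPForm → IPForm
  | [] => .impl .bot .bot
  | a :: l => .conj a (listConj l)

def listDisj : List IPForm → IPForm
  | [] => .bot
  | a :: l => .disj a (listDisj l)

theorem forces_listConj {M : KModel} {w : M.W} (l : List IPForm) :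
    M.Forces w (listConj l) ↔ ∀ a ∈ l, M.Forces w a := by
  induction l with
  | nil => simp [listConj, KModel.Forces]
  | cons a l ih => simp [listConj, KModel.Forces, ih]

theorem forces_listDisj {M : KModel} {w : M.W} (l : List IPForm) :
    M.Forces w (listDisj l) ↔ ∃ a ∈ l, M.Forces w a := by
  induction l with
  | nil => simp [listDisj, KModel.Forces]
  | cons a l ih => simp [listDisj, KModel.Forces, ih]

theorem vars_listConj {Q : Finset ℕ} (l : List IPForm) (h : ∀ a ∈ l, a.vars ⊆ Q) :
    (listConj l).vars ⊆ Q := by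
  induction l with
  | nil => simp [listConj, IPForm.vars]
  | cons a l ih =>
    exact Finset.union_subset (h a (by simp)) (ih fun b hb => h b (by simp [hb]))

theorem vars_listDisj {Q : Finset ℕ} (l : List IPForm) (h : ∀ a ∈ l, a.vars ⊆ Q) :
    (listDisj l).vars ⊆ Q := by
  induction l with
  | nil => simp [listDisj, IPForm.vars]
  | cons a l ih =>
    exact Finset.union_subset (h a (by simp)) (ih fun b hb => h b (by simp [hb]))

/-! ### Bounded bisimilarity and its definability -/

/-- The formula `⋀ A → ⋁ (F \ A)`. -/
noncomputable def excl (F A : Finset IPForm) : IPForm :=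
  .impl (listConj A.toList) (listDisj (F \ A).toList)

/-- The formulas of `F` forced at `w` are exactly those in `A`. -/
def Realizes (M : KModel) (w : M.W) (F A : Finset IPForm) : Prop :=
  ∀ a ∈ F, M.Forces w a ↔ a ∈ A

theorem forces_excl {M : KModel} {w : M.W} {F A : Finset IPForm} (hA : A ⊆ F) :
    M.Forces w (excl F A) ↔ ∀ v, M.rel w v → ¬ Realizes M v F A := by
  simp only [excl, KModel.Forces, forces_listConj, forces_listDisj, Finset.mem_toList,
    Finset.mem_sdiff, Realizes]
  refine forall_congr' fun v => imp_congr_right fun _ => ⟨fun h hr => ?_, fun h hc => ?_⟩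
  · obtain ⟨a, ⟨haF, haA⟩, ha⟩ := h fun a ha => (hr a (hA ha)).2 ha
    exact haA ((hr a haF).1 ha)
  · by_contra hn
    exact h fun a haF => ⟨fun ha => by_contra fun haA => hn ⟨a, ⟨haF, haA⟩, ha⟩, hc a⟩

theorem vars_excl {Q : Finset ℕ} {F A : Finset IPForm} (hF : ∀ a ∈ F, a.vars ⊆ Q) (hA : A ⊆ F) :
    (excl F A).vars ⊆ Q :=
  Finset.union_subset
    (vars_listConj _ fun a ha => hF a (hA (Finset.mem_toList.1 ha)))
    (vars_listDisj _ fun a ha => hF a (Finset.mem_sdiff.1 (Finset.mem_toList.1 ha)).1)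

open Classical in
theorem exists_realizes (M : KModel) (w : M.W) (F : Finset IPForm) :
    ∃ A ⊆ F, Realizes M w F A :=
  ⟨F.filter fun a => M.Forces w a, Finset.filter_subset _ _, fun a ha => by simp [ha]⟩

/-- `n`-step bisimilarity of the nodes `w` and `v` with respect to the variables in `Q`. -/
def LBisim (Q : Finset ℕ) (M N : KModel) : ℕ → M.W → N.W → Prop
  | 0, w, v => ∀ q ∈ Q, M.val q w ↔ N.val q v
  | n + 1, w, v => LBisim Q M N n w v ∧
      (∀ w', M.rel w w' → ∃ v', N.rel v v' ∧ LBisim Q M N n w' v') ∧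
      (∀ v', N.rel v v' → ∃ w', M.rel w w' ∧ LBisim Q M N n w' v')

theorem LBisim.anti {Q : Finset ℕ} {M N : KModel} {w : M.W} {v : N.W} {m n : ℕ} (hmn : m ≤ n)
    (h : LBisim Q M N n w v) : LBisim Q M N m w v := by
  induction hmn with
  | refl => exact h
  | step _ ih => exact ih h.1

/-- Finitely many formulas over `Q` suffice to guarantee `n`-step bisimilarity over `Q`: each
further step adds the formulas `excl F A`, which detect the types realized at later nodes. -/
theorem exists_types (Q : Finset ℕ) (n : ℕ) :
    ∃ F : Finset IPForm, (∀ a ∈ F, a.vars ⊆ Q) ∧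
      ∀ (M N : KModel) (w : M.W) (v : N.W),
        (∀ a ∈ F, M.Forces w a ↔ N.Forces v a) → LBisim Q M N n w v := by
  induction n with
  | zero =>
    refine ⟨Q.image .var, ?_, fun M N w v h q hq => h (.var q) (Finset.mem_image_of_mem _ hq)⟩
    intro a ha
    obtain ⟨q, hq, rfl⟩ := Finset.mem_image.1 ha
    simpa [IPForm.vars] using hq
  | succ n ih =>
    obtain ⟨F, hF, hB⟩ := ih
    refine ⟨F ∪ F.powerset.image (excl F), ?_, fun M N w v h => ⟨?_, ?_, ?_⟩⟩
    · intro a ha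
      rcases Finset.mem_union.1 ha with ha | ha
      · exact hF a ha
      · obtain ⟨A, hA, rfl⟩ := Finset.mem_image.1 ha
        exact vars_excl hF (Finset.mem_powerset.1 hA)
    · exact hB M N w v fun a ha => h a (Finset.mem_union_left _ ha)
    · intro w' hw
      obtain ⟨A, hA, hr⟩ := exists_realizes M w' F
      have h1 := h (excl F A) (Finset.mem_union_right _
        (Finset.mem_image_of_mem _ (Finset.mem_powerset.2 hA)))
      rw [forces_excl hA, forces_excl hA] at h1
      by_contra! hn
      exact h1.2 (fun v' hv hr' => hn v' hv (hB _ _ _ _ fun a ha =>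
        (hr a ha).trans (hr' a ha).symm)) w' hw hr
    · intro v' hv
      obtain ⟨A, hA, hr⟩ := exists_realizes N v' F
      have h1 := h (excl F A) (Finset.mem_union_right _
        (Finset.mem_image_of_mem _ (Finset.mem_powerset.2 hA)))
      rw [forces_excl hA, forces_excl hA] at h1
      by_contra! hn
      exact h1.1 (fun w' hw hr' => hn w' hw (hB _ _ _ _ fun a ha =>
        (hr' a ha).trans (hr a ha).symm)) _ hv hr

/-! ### Amalgamation -/

/-- The set of subformulas. -/
noncomputable def sub : IPForm → Finset IPForm
  | .var q => {.var q}
  | .bot => {.bot}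
  | .conj a b => insert (.conj a b) (sub a ∪ sub b)
  | .disj a b => insert (.disj a b) (sub a ∪ sub b)
  | .impl a b => insert (.impl a b) (sub a ∪ sub b)

theorem self_mem_sub (φ : IPForm) : φ ∈ sub φ := by
  cases φ <;> simp [sub]

theorem mem_vars_of_var_mem_sub {q : ℕ} {φ : IPForm} (h : .var q ∈ sub φ) : q ∈ φ.vars := by
  induction φ with
  | var r => simpa [sub, IPForm.vars] using h
  | bot => simp [sub] at h
  | conj a b iha ihb | disj a b iha ihb | impl a b iha ihb =>
    simp only [sub, Finset.mem_insert, reduceCtorEq, false_or, Finset.mem_union] at h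
    exact Finset.mem_union.2 (h.imp iha ihb)

/-- Every formula of `X` forced at `u` is forced at `v`. -/
def Le (X : Finset IPForm) (N : KModel) (u v : N.W) : Prop :=
  ∀ a ∈ X, N.Forces u a → N.Forces v a

open Classical in
/-- The number of formulas of `X` that are not forced at `v`. -/
noncomputable def defect (X : Finset IPForm) (N : KModel) (v : N.W) : ℕ :=
  (X.filter fun a => ¬ N.Forces v a).card

theorem defect_le_card (X : Finset IPForm) (N : KModel) (v : N.W) : defect X N v ≤ X.card := by
  classical
  exact Finset.card_filter_le _ _

theorem Le.defect_lt {X : Finset IPForm} {N : KModel} {u v : N.W} (h : Le X N u v)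
    (h' : ¬ Le X N v u) : defect X N v < defect X N u := by
  classical
  simp only [Le, not_forall] at h'
  obtain ⟨a, haX, hv, hu⟩ := h'
  unfold defect
  refine Finset.card_lt_card ((Finset.ssubset_iff_of_subset ?_).2
    ⟨a, by simp [haX, hu], by simp [hv]⟩)
  intro b hb
  simp only [Finset.mem_filter] at hb ⊢
  exact ⟨hb.1, fun hub => hb.2 (h b hb.1 hub)⟩

/-- The pairs `(m, n)` that are nodes of the amalgam. There must be a witnessing pair `(m₁, n₁)` with
`m₁` below `m` and `n₁` forcing the same formulas of `X` as `n`, where `(m₁, n₁)` is bisimilar for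
one step more than `(m, n)`. The spare step lets `m` move up while `n` keeps its formulas of `X`,
without any loss. -/
def Good (Q : Finset ℕ) (X : Finset IPForm) (M N : KModel) (x : M.W × N.W) : Prop :=
  ∃ m₁ n₁, M.rel m₁ x.1 ∧ Le X N n₁ x.2 ∧ Le X N x.2 n₁ ∧
    LBisim Q M N (2 * defect X N n₁ + 1) m₁ n₁ ∧ LBisim Q M N (2 * defect X N n₁) x.1 x.2

theorem good_of_bisim {Q : Finset ℕ} {X : Finset IPForm} {M N : KModel} {m : M.W} {n : N.W} {k : ℕ}
    (hk : 2 * defect X N n + 1 ≤ k) (h : LBisim Q M N k m n) : Good Q X M N (m, n) :=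
  ⟨m, n, M.refl m, fun _ _ => id, fun _ _ => id, h.anti hk, h.anti (by omega)⟩

/-- Each step in the left model lifts to the amalgam. -/
theorem Good.lift_left {Q : Finset ℕ} {X : Finset IPForm} {M N : KModel} {m : M.W} {n : N.W}
    (h : Good Q X M N (m, n)) {m' : M.W} (hm : M.rel m m') :
    ∃ n', Le X N n n' ∧ Good Q X M N (m', n') := by
  obtain ⟨m₁, n₁, hm₁, h₁, h₂, hb, -⟩ := h
  obtain ⟨n', hn', hbis⟩ := hb.2.1 m' (M.trans hm₁ hm)
  have hle : Le X N n₁ n' := fun _ _ => KModel.Forces.persist hn'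
  refine ⟨n', fun a ha hf => hle a ha (h₂ a ha hf), ?_⟩
  by_cases hge : Le X N n' n₁
  · exact ⟨m₁, n₁, M.trans hm₁ hm, hle, hge, hb, hbis⟩
  · have := hle.defect_lt hge
    exact good_of_bisim (by omega) hbis

/-- Each step in the right model lifts to the amalgam, if it adds a formula of `X`. -/
theorem Good.lift_right {Q : Finset ℕ} {X : Finset IPForm} {M N : KModel} {m : M.W} {n : N.W}
    (h : Good Q X M N (m, n)) {n' : N.W} (hn : N.rel n n') (hne : ¬ Le X N n' n) :
    ∃ m', M.rel m m' ∧ Good Q X M N (m', n') := by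
  obtain ⟨m₁, n₁, -, h₁, h₂, -, hb⟩ := h
  have hle : Le X N n₁ n' := fun a ha hf => (h₁ a ha hf).persist hn
  have hlt := hle.defect_lt fun hge => hne fun a ha hf => h₁ a ha (hge a ha hf)
  obtain ⟨m', hm', hbis⟩ :=
    (hb.anti (show 2 * defect X N n₁ - 1 + 1 ≤ _ by omega)).2.2 n' hn
  exact ⟨m', hm', good_of_bisim (by omega) hbis⟩

/-- The amalgam of `M` and `N`: `p` is evaluated in `N`, every other variable in `M`. Forcing of `p`
in `N` counts only if `p ∈ X`, because the order ignores formulas outside `X`. -/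
def amalgam (p : ℕ) (Q : Finset ℕ) (X : Finset IPForm) (M N : KModel) : KModel where
  W := {x : M.W × N.W // Good Q X M N x}
  rel x y := M.rel x.1.1 y.1.1 ∧ Le X N x.1.2 y.1.2
  refl x := ⟨M.refl _, fun _ _ => id⟩
  trans h h' := ⟨M.trans h.1 h'.1, fun a ha hf => h'.2 a ha (h.2 a ha hf)⟩
  val q x := if q = p then IPForm.var p ∈ X ∧ N.val p x.1.2 else M.val q x.1.1
  mono {q u v} h hu := by
    split_ifs at hu ⊢ with hq
    · exact ⟨hu.1, h.2 _ hu.1 hu.2⟩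
    · exact M.mono h.1 hu

theorem amalgam_fst {p : ℕ} {Q : Finset ℕ} {X : Finset IPForm} {M N : KModel} (ψ : IPForm)
    (hψ : p ∉ ψ.vars) (x : (amalgam p Q X M N).W) :
    (amalgam p Q X M N).Forces x ψ ↔ M.Forces x.1.1 ψ := by
  induction ψ generalizing x with
  | var q =>
    have hq : q ≠ p := by rintro rfl; simp [IPForm.vars] at hψ
    simp [KModel.Forces, amalgam, hq]
  | bot => exact Iff.rfl
  | conj a b iha ihb =>
    simp only [IPForm.vars, Finset.mem_union, not_or] at hψ
    exact and_congr (iha hψ.1 x) (ihb hψ.2 x)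
  | disj a b iha ihb =>
    simp only [IPForm.vars, Finset.mem_union, not_or] at hψ
    exact or_congr (iha hψ.1 x) (ihb hψ.2 x)
  | impl a b iha ihb =>
    simp only [IPForm.vars, Finset.mem_union, not_or] at hψ
    constructor
    · intro h m' hm ha
      obtain ⟨n', hn', hg⟩ := x.2.lift_left hm
      exact (ihb hψ.2 ⟨(m', n'), hg⟩).1 (h ⟨(m', n'), hg⟩ ⟨hm, hn'⟩ ((iha hψ.1 _).2 ha))
    · intro h y hy ha
      exact (ihb hψ.2 y).2 (h _ hy.1 ((iha hψ.1 y).1 ha))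

/-- In the implication case, a later node of `N` that forces no new formula of `X` need not be lifted:
the given node of the amalgam already serves in its place. -/
theorem amalgam_snd {p : ℕ} {Q : Finset ℕ} {X : Finset IPForm} {M N : KModel}
    (hQ : ∀ q, IPForm.var q ∈ X → q ≠ p → q ∈ Q) (χ : IPForm) (hχ : sub χ ⊆ X)
    (x : (amalgam p Q X M N).W) :
    (amalgam p Q X M N).Forces x χ ↔ N.Forces x.1.2 χ := by
  induction χ generalizing x with
  | var q =>
    have hX := hχ (self_mem_sub _)
    by_cases hq : q = p
    · subst hq
      simp [KModel.Forces, amalgam, hX]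
    · obtain ⟨_, _, -, -, -, -, hb⟩ := x.2
      simpa [KModel.Forces, amalgam, hq] using hb.anti (Nat.zero_le _) q (hQ q hX hq)
  | bot => exact Iff.rfl
  | conj a b iha ihb =>
    simp only [sub, Finset.insert_subset_iff, Finset.union_subset_iff] at hχ
    exact and_congr (iha hχ.2.1 x) (ihb hχ.2.2 x)
  | disj a b iha ihb =>
    simp only [sub, Finset.insert_subset_iff, Finset.union_subset_iff] at hχ
    exact or_congr (iha hχ.2.1 x) (ihb hχ.2.2 x)
  | impl a b iha ihb =>
    simp only [sub, Finset.insert_subset_iff, Finset.union_subset_iff] at hχ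
    obtain ⟨hX, hA, hB⟩ := hχ
    constructor
    · intro h n' hn ha
      by_cases hge : Le X N n' x.1.2
      · have hb := h x ((amalgam p Q X M N).refl x)
          ((iha hA x).2 (hge a (hA (self_mem_sub a)) ha))
        exact ((ihb hB x).1 hb).persist hn
      · obtain ⟨m', hm', hg⟩ := x.2.lift_right hn hge
        exact (ihb hB ⟨(m', n'), hg⟩).1 (h ⟨(m', n'), hg⟩
          ⟨hm', fun _ _ hf => hf.persist hn⟩ ((iha hA _).2 ha))
    · intro h y hy ha
      exact (ihb hB y).2 (hy.2 _ hX h _ (N.refl _) ((iha hA y).1 ha))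

/-- If `ψ ⊨ φ` with `ψ` free of `p`, then `φ` also holds at every node that is sufficiently
bisimilar, over the other variables of `φ`, to a node forcing `ψ`. -/
theorem forces_of_bisim {p : ℕ} {φ ψ : IPForm} (hψ : p ∉ ψ.vars) (h : Entails ψ φ)
    {M N : KModel} (hM : Finite M.W) (hN : Finite N.W) {w : M.W} {v : N.W}
    (hb : LBisim (φ.vars.erase p) M N (2 * (sub φ).card + 1) w v) (hw : M.Forces w ψ) :
    N.Forces v φ := by
  have hg : Good (φ.vars.erase p) (sub φ) M N (w, v) :=
    good_of_bisim (by have := defect_le_card (sub φ) N v; omega) hb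
  have hfin : Finite (amalgam p (φ.vars.erase p) (sub φ) M N).W :=
    inferInstanceAs (Finite {x : M.W × N.W // Good (φ.vars.erase p) (sub φ) M N x})
  exact (amalgam_snd (fun q hq hne => Finset.mem_erase.2 ⟨hne, mem_vars_of_var_mem_sub hq⟩) φ
    subset_rfl ⟨(w, v), hg⟩).1 (h _ hfin _ ((amalgam_fst ψ hψ ⟨(w, v), hg⟩).2 hw))

end PittsInterp

/-! ### The interpolant -/

open PittsInterp in
/-- **Pitts' uniform interpolation theorem, left interpolants.**
For every intuitionistic propositional formula φ and variable p, there is a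
formula α whose variables occur in φ, not containing p, with α ⊨ φ, and
which is entailed by every p-free formula entailing φ. -/
theorem pitts_left_uniform_interpolation (φ : IPForm) (p : ℕ) :
    ∃ α : IPForm, α.vars ⊆ φ.vars ∧ p ∉ α.vars ∧ Entails α φ ∧
      ∀ ψ : IPForm, p ∉ ψ.vars → Entails ψ φ → Entails ψ α := by
  classical
  obtain ⟨F, hF, hB⟩ := exists_types (φ.vars.erase p) (2 * (sub φ).card + 1)
  let bad : Finset (Finset IPForm) := F.powerset.filter fun A =>
    ∃ (N : KModel) (v : N.W), Finite N.W ∧ Realizes N v F A ∧ ¬ N.Forces v φ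
  have hbad : ∀ {A}, A ∈ bad ↔ A ⊆ F ∧
      ∃ (N : KModel) (v : N.W), Finite N.W ∧ Realizes N v F A ∧ ¬ N.Forces v φ := by
    simp [bad]
  let α := listConj (bad.toList.map (excl F))
  have hα : ∀ (M : KModel) (w : M.W),
      M.Forces w α ↔ ∀ A ∈ bad, ∀ v, M.rel w v → ¬ Realizes M v F A := by
    intro M w
    simp only [α, forces_listConj, List.forall_mem_map, Finset.mem_toList]
    exact forall₂_congr fun A hA => forces_excl (hbad.1 hA).1
  have hvars : α.vars ⊆ φ.vars.erase p := by
    refine vars_listConj _ ?_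
    simp only [List.forall_mem_map, Finset.mem_toList]
    exact fun A hA => vars_excl hF (hbad.1 hA).1
  refine ⟨α, hvars.trans (Finset.erase_subset _ _),
    fun hp => Finset.notMem_erase _ _ (hvars hp), ?_, ?_⟩
  · intro M hM w hw
    by_contra hn
    obtain ⟨A, hA, hr⟩ := exists_realizes M w F
    exact (hα M w).1 hw A (hbad.2 ⟨hA, M, w, hM, hr, hn⟩) w (M.refl w) hr
  · intro ψ hψ h M hM w hw
    refine (hα M w).2 fun A hA w' hww' hr => ?_
    obtain ⟨-, N, v, hN, hr', hn⟩ := hbad.1 hA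
    exact hn (forces_of_bisim hψ h hM hN
      (hB M N w' v fun a ha => (hr a ha).trans (hr' a ha).symm) (hw.persist hww'))
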